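/- arXiv:1303.1063 — 7 statements merged into one kernel-verified Lean document; each statement's English description precedes it below -/
import Mathlib

section
/- Let θ : ℝ³ → ℝ be a smooth function and consider the 1-form α = cos(θ(x,y,z)) dx − sin(θ(x,y,z)) dy on ℝ³. Then its contact coefficient satisfies D(α)(x,y,z) = ∂θ/∂z (x,y,z) at every point; hence α is a contact form if and only if ∂θ/∂z > 0 everywhere. In particular, taking θ(x,y,z) = z, the canonical 1-form cos(z) dx − sin(z) dy has contact coefficient identically 1 and is a contact form. -/
/-- Partial derivative of `f : ℝ³ → ℝ` at `p` in the `i`-th coordinate direction. -/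
noncomputable def pd (i : Fin 3) (f : (Fin 3 → ℝ) → ℝ) (p : Fin 3 → ℝ) : ℝ :=
  fderiv ℝ f p (Pi.single i 1)

/-- The contact coefficient of the 1-form `a dx + b dy + c dz` on ℝ³, i.e. the coefficient
of `α ∧ dα` with respect to `dx ∧ dy ∧ dz`. -/
noncomputable def contactCoeff (a b c : (Fin 3 → ℝ) → ℝ) (p : Fin 3 → ℝ) : ℝ :=
  a p * (pd 1 c p - pd 2 b p) + b p * (pd 2 a p - pd 0 c p) + c p * (pd 0 b p - pd 1 a p)

/-- By the chain rule, `D = (cos² θ + sin² θ) ∂θ/∂z`; only differentiability of `θ` at the point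
is needed. -/
theorem contactCoeff_cos_sin {θ : (Fin 3 → ℝ) → ℝ} {p : Fin 3 → ℝ}
    (h : DifferentiableAt ℝ θ p) :
    contactCoeff (fun p => Real.cos (θ p)) (fun p => -Real.sin (θ p)) (fun _ => 0) p
      = pd 2 θ p := by
  have hc : fderiv ℝ (fun p => Real.cos (θ p)) p = -Real.sin (θ p) • fderiv ℝ θ p :=
    h.hasFDerivAt.cos.fderiv
  have hs : fderiv ℝ (fun p => -Real.sin (θ p)) p = -(Real.cos (θ p) • fderiv ℝ θ p) :=
    h.hasFDerivAt.sin.neg.fderiv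
  simp only [contactCoeff, pd, hc, hs, fderiv_fun_const, Pi.zero_apply,
    zero_apply, neg_apply,
    smul_apply, smul_eq_mul]
  linear_combination (fderiv ℝ θ p (Pi.single 2 1)) * Real.cos_sq_add_sin_sq (θ p)

/-- The 1-form `cos θ dx − sin θ dy` on ℝ³ has contact coefficient `∂θ/∂z`; hence it is a
contact form iff `∂θ/∂z > 0` everywhere. In particular, for `θ(x,y,z) = z`, the canonical
1-form `cos z dx − sin z dy` has contact coefficient identically `1` and is a contact form. -/
theorem contactCoeff_rotating (θ : (Fin 3 → ℝ) → ℝ) (hθ : ContDiff ℝ (⊤ : ℕ∞) θ) :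
    (∀ p, contactCoeff (fun p => Real.cos (θ p)) (fun p => -Real.sin (θ p)) (fun _ => 0) p
        = pd 2 θ p) ∧
    ((∀ p, 0 < contactCoeff (fun p => Real.cos (θ p)) (fun p => -Real.sin (θ p))
        (fun _ => 0) p) ↔ (∀ p, 0 < pd 2 θ p)) ∧
    (∀ p, contactCoeff (fun p => Real.cos (p 2)) (fun p => -Real.sin (p 2)) (fun _ => 0) p
        = 1) ∧
    (∀ p, 0 < contactCoeff (fun p => Real.cos (p 2)) (fun p => -Real.sin (p 2))
        (fun _ => 0) p) := by
  have hD : ∀ p, contactCoeff (fun p => Real.cos (θ p)) (fun p => -Real.sin (θ p))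
      (fun _ => 0) p = pd 2 θ p := fun p =>
    contactCoeff_cos_sin (hθ.differentiable (by simp) p)
  have hz : ∀ p, contactCoeff (fun p => Real.cos (p 2)) (fun p => -Real.sin (p 2))
      (fun _ => 0) p = 1 := fun p => by
    have hp : HasFDerivAt (fun q : Fin 3 → ℝ => q 2)
        (ContinuousLinearMap.proj (R := ℝ) (φ := fun _ : Fin 3 => ℝ) 2) p :=
      hasFDerivAt_apply 2 p
    rw [contactCoeff_cos_sin (θ := fun q => q 2) hp.differentiableAt, pd, hp.fderiv]
    simp
  exact ⟨hD, by simp only [hD], hz, fun p => by rw [hz]; exact one_pos⟩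
end

section
/- Let s : ℝ → ℝ be the smooth function with s(r) = sin(r)/r for r ≠ 0 and s(0) = 1, and let r(x,y) = √(x² + y²). Then the 1-form α_OT = −y·s(r) dx + x·s(r) dy + cos(r) dz on ℝ³ (i.e. cos(r) dz + r sin(r) dθ in cylindrical coordinates) is smooth and its contact coefficient is strictly positive at every point of ℝ³ (it equals 1 + sin(r)cos(r)/r for r > 0 and 2 at r = 0); in particular α_OT is a contact form. Its kernel ξ_OT is the standard overtwisted contact structure on ℝ³. -/
/-- The distance to the z-axis. -/
noncomputable def radius (p : Fin 3 → ℝ) : ℝ := Real.sqrt ((p 0) ^ 2 + (p 1) ^ 2)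

/-- A real power series with `|c n| ≤ 1 / n!` has infinite radius of convergence, hence a smooth
sum. -/
lemma contDiff_powerSeries (c : ℕ → ℝ) (hc : ∀ n, |c n| ≤ 1 / (n.factorial : ℝ)) :
    ContDiff ℝ (⊤ : ℕ∞) (fun t : ℝ => ∑' n, c n * t ^ n) := by
  have hrad : (FormalMultilinearSeries.ofScalars ℝ c).radius = ⊤ := by
    refine FormalMultilinearSeries.radius_eq_top_of_summable_norm _ fun r => ?_
    refine Summable.of_nonneg_of_le (fun n => by positivity) (fun n => ?_)
      (Real.summable_pow_div_factorial (r : ℝ))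
    rw [FormalMultilinearSeries.ofScalars_norm, Real.norm_eq_abs]
    calc |c n| * (r : ℝ) ^ n ≤ 1 / (n.factorial : ℝ) * (r : ℝ) ^ n := by
          gcongr
          exact hc n
      _ = _ := by ring
  have h := (FormalMultilinearSeries.ofScalars ℝ c).hasFPowerSeriesOnBall (by simp [hrad])
  rw [hrad] at h
  have hs : (FormalMultilinearSeries.ofScalars ℝ c).sum = fun t : ℝ => ∑' n, c n * t ^ n := by
    funext t
    simp [FormalMultilinearSeries.sum, mul_comm]
  rw [← hs]
  refine AnalyticOnNhd.contDiff ?_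
  simpa using h.analyticOnNhd

/-- If `m n ≥ n`, the coefficients `(-1)ⁿ / (m n)!` satisfy the bound of
`contDiff_powerSeries`. -/
lemma abs_alternating_coeff_le (m : ℕ → ℕ) (hm : ∀ n, n ≤ m n) (n : ℕ) :
    |(-1 : ℝ) ^ n / ((m n).factorial : ℝ)| ≤ 1 / (n.factorial : ℝ) := by
  rw [abs_div, abs_pow, abs_neg, abs_one, one_pow, Nat.abs_cast]
  gcongr
  exact hm n

lemma exists_contDiff_cos_eq_comp_sq :
    ∃ C : ℝ → ℝ, ContDiff ℝ (⊤ : ℕ∞) C ∧ ∀ r, C (r ^ 2) = Real.cos r := by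
  refine ⟨_, contDiff_powerSeries (fun n => (-1) ^ n / ((2 * n).factorial : ℝ))
    (abs_alternating_coeff_le (fun n => 2 * n) (fun n => by omega)), fun r => ?_⟩
  rw [← (Real.hasSum_cos r).tsum_eq]
  refine tsum_congr fun n => ?_
  rw [← pow_mul]
  ring

lemma exists_contDiff_sin_eq_mul_comp_sq :
    ∃ S : ℝ → ℝ, ContDiff ℝ (⊤ : ℕ∞) S ∧ S 0 = 1 ∧ ∀ r, r * S (r ^ 2) = Real.sin r := by
  refine ⟨_, contDiff_powerSeries (fun n => (-1) ^ n / ((2 * n + 1).factorial : ℝ))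
    (abs_alternating_coeff_le (fun n => 2 * n + 1) (fun n => by omega)), ?_, fun r => ?_⟩
  · rw [tsum_eq_single 0 (fun n hn => by simp [hn])]
    simp
  rw [← (Real.hasSum_sin r).tsum_eq, ← tsum_mul_left]
  refine tsum_congr fun n => ?_
  rw [← pow_mul]
  ring

/-- The derivatives of `C (t) = cos √t` and `S (t) = sin √t / √t`, found by differentiating
`C (r²) = cos r` and `r S (r²) = sin r`.  The first relation carries a factor `r²`, so that both
hold at `r = 0` without a separate argument. -/
lemma deriv_relations {C S : ℝ → ℝ} (hC : Differentiable ℝ C) (hS : Differentiable ℝ S)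
    (hCr : ∀ r, C (r ^ 2) = Real.cos r) (hSr : ∀ r, r * S (r ^ 2) = Real.sin r) (r : ℝ) :
    r ^ 2 * (2 * deriv C (r ^ 2)) = - (r ^ 2 * S (r ^ 2)) ∧
      2 * r ^ 2 * deriv S (r ^ 2) = C (r ^ 2) - S (r ^ 2) := by
  have hsq : HasDerivAt (fun r : ℝ => r ^ 2) (2 * r) r := by
    simpa using hasDerivAt_pow 2 r
  have h1 : HasDerivAt (fun r : ℝ => C (r ^ 2)) (deriv C (r ^ 2) * (2 * r)) r :=
    (hC (r ^ 2)).hasDerivAt.comp r hsq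
  have h2 : HasDerivAt (fun r : ℝ => r * S (r ^ 2))
      (1 * S (r ^ 2) + r * (deriv S (r ^ 2) * (2 * r))) r :=
    (hasDerivAt_id r).mul ((hS (r ^ 2)).hasDerivAt.comp r hsq)
  simp only [hCr] at h1
  simp only [hSr] at h2
  have e1 := h1.unique (Real.hasDerivAt_cos r)
  have e2 := h2.unique (Real.hasDerivAt_sin r)
  rw [← hSr r] at e1
  rw [← hCr r] at e2
  constructor
  · linear_combination r * e1
  · linear_combination e2

/-- The contact coefficient of a rotationally symmetric form `S(u) (x dy - y dx) + C(u) dz`,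
where `u = x² + y²`. -/
lemma contactCoeff_radial {C S : ℝ → ℝ} (hC : Differentiable ℝ C) (hS : Differentiable ℝ S)
    (p : Fin 3 → ℝ) :
    contactCoeff (fun p => -p 1 * S (p 0 ^ 2 + p 1 ^ 2)) (fun p => p 0 * S (p 0 ^ 2 + p 1 ^ 2))
        (fun p => C (p 0 ^ 2 + p 1 ^ 2)) p =
      -2 * (p 0 ^ 2 + p 1 ^ 2) * S (p 0 ^ 2 + p 1 ^ 2) * deriv C (p 0 ^ 2 + p 1 ^ 2) +
        C (p 0 ^ 2 + p 1 ^ 2) * (2 * S (p 0 ^ 2 + p 1 ^ 2) +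
          2 * (p 0 ^ 2 + p 1 ^ 2) * deriv S (p 0 ^ 2 + p 1 ^ 2)) := by
  have hp (i : Fin 3) : HasFDerivAt (fun q : Fin 3 → ℝ => q i)
      (ContinuousLinearMap.proj (R := ℝ) (φ := fun _ : Fin 3 => ℝ) i) p :=
    hasFDerivAt_apply i p
  have hu := ((hp 0).pow 2).add ((hp 1).pow 2)
  have hSu := (hS (p 0 ^ 2 + p 1 ^ 2)).hasDerivAt.comp_hasFDerivAt p hu
  have hCu := (hC (p 0 ^ 2 + p 1 ^ 2)).hasDerivAt.comp_hasFDerivAt p hu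
  have ha : HasFDerivAt (fun p : Fin 3 → ℝ => -p 1 * S (p 0 ^ 2 + p 1 ^ 2)) _ p :=
    (hp 1).neg.mul hSu
  have hb : HasFDerivAt (fun p : Fin 3 → ℝ => p 0 * S (p 0 ^ 2 + p 1 ^ 2)) _ p :=
    (hp 0).mul hSu
  have hc : HasFDerivAt (fun p : Fin 3 → ℝ => C (p 0 ^ 2 + p 1 ^ 2)) _ p := hCu
  simp only [contactCoeff, pd, ha.fderiv, hb.fderiv, hc.fderiv]
  simp
  ring

/-- The overtwisted 1-form `α_OT = cos r dz + r sin r dθ`, written in Cartesian coordinates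
as `−y·s(r) dx + x·s(r) dy + cos r dz` with `s(r) = sin r / r` (and `s(0) = 1`), is smooth,
has everywhere strictly positive contact coefficient (equal to `1 + sin r cos r / r` for
`r > 0` and to `2` at `r = 0`); in particular it is a contact form. Its kernel is the
standard overtwisted contact structure on ℝ³. -/
theorem contactCoeff_overtwisted (s : ℝ → ℝ) (hs : ContDiff ℝ (⊤ : ℕ∞) s)
    (hs_ne : ∀ r : ℝ, r ≠ 0 → s r = Real.sin r / r) (hs0 : s 0 = 1) :
    ContDiff ℝ (⊤ : ℕ∞) (fun p : Fin 3 → ℝ => -p 1 * s (radius p)) ∧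
    ContDiff ℝ (⊤ : ℕ∞) (fun p : Fin 3 → ℝ => p 0 * s (radius p)) ∧
    ContDiff ℝ (⊤ : ℕ∞) (fun p : Fin 3 → ℝ => Real.cos (radius p)) ∧
    (∀ p : Fin 3 → ℝ,
      0 < contactCoeff (fun p => -p 1 * s (radius p)) (fun p => p 0 * s (radius p))
        (fun p => Real.cos (radius p)) p) ∧
    (∀ p : Fin 3 → ℝ, radius p ≠ 0 →
      contactCoeff (fun p => -p 1 * s (radius p)) (fun p => p 0 * s (radius p))
        (fun p => Real.cos (radius p)) p
      = 1 + Real.sin (radius p) * Real.cos (radius p) / radius p) ∧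
    (∀ p : Fin 3 → ℝ, radius p = 0 →
      contactCoeff (fun p => -p 1 * s (radius p)) (fun p => p 0 * s (radius p))
        (fun p => Real.cos (radius p)) p = 2) := by
  obtain ⟨C, hC, hCr⟩ := exists_contDiff_cos_eq_comp_sq
  obtain ⟨S, hS, hS0, hSr⟩ := exists_contDiff_sin_eq_mul_comp_sq
  have hrad (p : Fin 3 → ℝ) : radius p ^ 2 = p 0 ^ 2 + p 1 ^ 2 :=
    Real.sq_sqrt (by positivity)
  have hcos (p : Fin 3 → ℝ) : Real.cos (radius p) = C (p 0 ^ 2 + p 1 ^ 2) := by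
    rw [← hrad, hCr]
  have hsS (r : ℝ) : s r = S (r ^ 2) := by
    rcases eq_or_ne r 0 with rfl | hr
    · simp [hs0, hS0]
    · rw [hs_ne r hr, ← hSr r]
      field_simp
  have hsin (p : Fin 3 → ℝ) : s (radius p) = S (p 0 ^ 2 + p 1 ^ 2) := by
    rw [hsS, hrad]
  have hCd : Differentiable ℝ C := hC.differentiable (by simp)
  have hSd : Differentiable ℝ S := hS.differentiable (by simp)
  have key (p : Fin 3 → ℝ) :
      contactCoeff (fun p => -p 1 * s (radius p)) (fun p => p 0 * s (radius p))
        (fun p => Real.cos (radius p)) p = 1 + Real.cos (radius p) * s (radius p) := by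
    simp only [hcos, hsin]
    rw [contactCoeff_radial hCd hSd p, ← hrad]
    obtain ⟨e1, e2⟩ := deriv_relations hCd hSd hCr hSr (radius p)
    have e3 := Real.sin_sq_add_cos_sq (radius p)
    rw [← hSr, ← hCr] at e3
    linear_combination (-S (radius p ^ 2)) * e1 + C (radius p ^ 2) * e2 + e3
  have key_ne (p : Fin 3 → ℝ) (hp : radius p ≠ 0) :
      contactCoeff (fun p => -p 1 * s (radius p)) (fun p => p 0 * s (radius p))
        (fun p => Real.cos (radius p)) p
      = 1 + Real.sin (radius p) * Real.cos (radius p) / radius p := by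
    rw [key, hs_ne _ hp]
    ring
  have key_zero (p : Fin 3 → ℝ) (hp : radius p = 0) :
      contactCoeff (fun p => -p 1 * s (radius p)) (fun p => p 0 * s (radius p))
        (fun p => Real.cos (radius p)) p = 2 := by
    rw [key, hp, hs0, Real.cos_zero]
    norm_num
  refine ⟨?_, ?_, ?_, fun p => ?_, key_ne, key_zero⟩
  · simp only [hsin]
    fun_prop
  · simp only [hsin]
    fun_prop
  · simp only [hcos]
    fun_prop
  · by_cases hp : radius p = 0
    · rw [key_zero p hp]
      norm_num
    · rw [key_ne p hp]
      have hpos : 0 < radius p := lt_of_le_of_ne (Real.sqrt_nonneg _) (Ne.symm hp)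
      have h1 : |Real.sin (radius p) * Real.cos (radius p) / radius p| < 1 := by
        rw [abs_div, abs_mul, abs_of_pos hpos, div_lt_one hpos]
        have hlt := Real.abs_sin_lt_abs hp
        rw [abs_of_pos hpos] at hlt
        exact (mul_le_of_le_one_right (abs_nonneg _) (Real.abs_cos_le_one _)).trans_lt hlt
      linarith [(abs_lt.mp h1).1]
end

section
/- Let u : ℝ² → ℝ and Y : ℝ² → ℝ² be smooth and satisfy the invariant contact condition u(p)·div Y(p) − du_p(Y(p)) > 0 for all p. Then Y has no periodic orbit along which the divergence of Y vanishes: there is no T > 0 and differentiable γ : ℝ → ℝ² with γ'(t) = Y(γ(t)) for all t, γ(t + T) = γ(t) for all t, and div Y(γ(t)) = 0 for all t. (A ξ-convex surface has no closed leaf of vanishing divergence; in particular degenerate closed leaves obstruct ξ-convexity.) -/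
/-- Partial derivative of `f : ℝ² → ℝ` at `p` in the `i`-th coordinate direction. -/
noncomputable def pd2 (i : Fin 2) (f : (Fin 2 → ℝ) → ℝ) (p : Fin 2 → ℝ) : ℝ :=
  fderiv ℝ f p (Pi.single i 1)

/-- The divergence of a vector field `Y` on ℝ² (with respect to the standard area form). -/
noncomputable def div2 (Y : (Fin 2 → ℝ) → Fin 2 → ℝ) (p : Fin 2 → ℝ) : ℝ :=
  pd2 0 (fun q => Y q 0) p + pd2 1 (fun q => Y q 1) p

/-- If `(u, Y)` satisfies the invariant contact condition `u·div Y − du(Y) > 0` (condition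
(†′)), then `Y` has no periodic orbit along which its divergence vanishes: a ξ-convex
surface has no degenerate closed leaf in its characteristic foliation. -/
theorem no_degenerate_closed_leaf (u : (Fin 2 → ℝ) → ℝ) (Y : (Fin 2 → ℝ) → Fin 2 → ℝ)
    (hu : ContDiff ℝ (⊤ : ℕ∞) u) (hY : ContDiff ℝ (⊤ : ℕ∞) Y)
    (hcontact : ∀ p, 0 < u p * div2 Y p - fderiv ℝ u p (Y p)) :
    ¬ ∃ (T : ℝ) (γ : ℝ → Fin 2 → ℝ), 0 < T ∧
        (∀ t, HasDerivAt γ (Y (γ t)) t) ∧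
        (∀ t, γ (t + T) = γ t) ∧
        (∀ t, div2 Y (γ t) = 0) := by
  rintro ⟨T, γ, hT, hγ, hper, hdiv⟩
  -- Where `div Y = 0`, the contact condition reads `du(Y) < 0`, so `u` strictly decreases along
  -- the orbit, which is incompatible with `γ (0 + T) = γ 0`.
  have hd : ∀ t, HasDerivAt (fun s => u (γ s)) (fderiv ℝ u (γ t) (Y (γ t))) t := fun t =>
    ((hu.differentiable (by simp)) (γ t)).hasFDerivAt.comp_hasDerivAt t (hγ t)
  have hanti : StrictAnti (fun s => u (γ s)) := by
    refine strictAnti_of_deriv_neg fun t => ?_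
    have h := hcontact (γ t)
    rw [hdiv t] at h
    rw [(hd t).deriv]
    linarith
  have h : u (γ (0 + T)) < u (γ 0) := hanti (by linarith)
  rw [hper 0] at h
  exact lt_irrefl _ h
end

section
/- Let u : ℝ² → ℝ and Y : ℝ² → ℝ² be smooth and satisfy the invariant contact condition u(p)·div Y(p) − du_p(Y(p)) > 0 for all p. Let γ : I → ℝ² be a differentiable solution of γ'(t) = Y(γ(t)) on an interval I. If s, t ∈ I with s ≤ t and u(γ(s)) ≤ 0, then u(γ(t)) ≤ 0. In particular no orbit of the characteristic foliation can travel from the region {u < 0} to the region {u > 0}; since positive singularities lie in {u > 0} and negative ones in {u < 0}, a ξ-convex surface has no retrograde connection (no leaf from a negative singularity to a positive one). -/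
/-- If `(u, Y)` satisfies the invariant contact condition `u·div Y − du(Y) > 0` (condition
(†′)) and `γ` is an orbit of `Y` on an interval `I`, then `u ∘ γ` can never pass from
nonpositive to positive values: no leaf of the characteristic foliation travels from
`{u < 0}` to `{u > 0}`, so a ξ-convex surface has no retrograde connection. -/
theorem no_retrograde_connection (u : (Fin 2 → ℝ) → ℝ) (Y : (Fin 2 → ℝ) → Fin 2 → ℝ)
    (hu : ContDiff ℝ (⊤ : ℕ∞) u) (hY : ContDiff ℝ (⊤ : ℕ∞) Y)
    (hcontact : ∀ p, 0 < u p * div2 Y p - fderiv ℝ u p (Y p))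
    (I : Set ℝ) (hI : I.OrdConnected) (γ : ℝ → Fin 2 → ℝ)
    (hγ : ∀ t ∈ I, HasDerivAt γ (Y (γ t)) t)
    (s t : ℝ) (hs : s ∈ I) (ht : t ∈ I) (hst : s ≤ t)
    (h0 : u (γ s) ≤ 0) :
    u (γ t) ≤ 0 := by
  have hd : ∀ x ∈ Set.Icc s t,
      HasDerivAt (fun x => u (γ x)) (fderiv ℝ u (γ x) (Y (γ x))) x := fun x hx =>
    ((hu.differentiable (by simp)) (γ x)).hasFDerivAt.comp_hasDerivAt x
      (hγ x (hI.out hs ht hx))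
  -- Fencing lemma with the constant barrier `0`: it suffices that the derivative of `u ∘ γ`
  -- is negative wherever `u ∘ γ` vanishes, and there the term `u · div Y` drops out.
  refine image_le_of_deriv_right_lt_deriv_boundary
    (f := fun x => u (γ x)) (f' := fun x => fderiv ℝ u (γ x) (Y (γ x)))
    (B := fun _ => 0) (B' := fun _ => 0) (a := s) (b := t)
    (fun x hx => (hd x hx).continuousAt.continuousWithinAt)
    (fun x hx => (hd x (Set.Ico_subset_Icc_self hx)).hasDerivWithinAt)
    h0 (fun x => hasDerivAt_const x 0) (fun x _ hx0 => ?_) (Set.right_mem_Icc.2 hst)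
  have h := hcontact (γ x)
  have hx0' : u (γ x) = 0 := hx0
  rw [hx0', zero_mul] at h
  linarith
end

section
/- Let a, b, u : ℝ² → ℝ be smooth functions that are ℤ²-periodic (a(p + k) = a(p), b(p + k) = b(p), u(p + k) = u(p) for all p ∈ ℝ² and k ∈ ℤ²). Then the function a·∂u/∂y − b·∂u/∂x vanishes at some point of ℝ². Consequently, if moreover ∂b/∂x = ∂a/∂y (i.e. the 1-form β = a dx + b dy on the torus is closed), then there is no ℤ²-periodic u satisfying the contact condition u·(∂b/∂x − ∂a/∂y) + a·∂u/∂y − b·∂u/∂x > 0 everywhere: a torus whose characteristic foliation is defined by a closed 1-form (a pre-Lagrangian torus) is not ξ-convex. -/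
/-- A function on ℝ² is ℤ²-periodic (i.e. descends to the torus T² = ℝ²/ℤ²). -/
def ZZPeriodic (f : (Fin 2 → ℝ) → ℝ) : Prop :=
  ∀ (p : Fin 2 → ℝ) (k : Fin 2 → ℤ), f (p + fun i => (k i : ℝ)) = f p

theorem exists_fderiv_eq_zero_of_ZZPeriodic {u : (Fin 2 → ℝ) → ℝ}
    (hu : Continuous u) (hup : ZZPeriodic u) : ∃ p, fderiv ℝ u p = 0 := by
  obtain ⟨p, -, hp⟩ := (isCompact_Icc (a := (0 : Fin 2 → ℝ)) (b := 1)).exists_isMaxOn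
    ⟨0, by simp⟩ hu.continuousOn
  refine ⟨p, IsLocalMax.fderiv_eq_zero (Filter.Eventually.of_forall fun q => ?_)⟩
  -- Translate `q` into the unit square by subtracting its integer parts.
  have hq : u (fun i => Int.fract (q i)) = u q := by
    rw [← hup (fun i => Int.fract (q i)) fun i => ⌊q i⌋]
    congr 1
    ext i
    simp
  rw [← hq]
  exact hp ⟨fun i => Int.fract_nonneg _, fun i => (Int.fract_lt_one _).le⟩

/-- On the torus, the function `a·∂u/∂y − b·∂u/∂x` must vanish somewhere; consequently if
the 1-form `β = a dx + b dy` is closed (`∂b/∂x = ∂a/∂y`), no ℤ²-periodic `u` satisfies the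
invariant contact condition (†) `u dβ + β ∧ du > 0`: a pre-Lagrangian torus, whose
characteristic foliation is defined by a closed 1-form, is not ξ-convex. -/
theorem pre_lagrangian_not_convex (a b u : (Fin 2 → ℝ) → ℝ)
    (ha : ContDiff ℝ (⊤ : ℕ∞) a) (hb : ContDiff ℝ (⊤ : ℕ∞) b) (hu : ContDiff ℝ (⊤ : ℕ∞) u)
    (hap : ZZPeriodic a) (hbp : ZZPeriodic b) (hup : ZZPeriodic u) :
    (∃ p, a p * pd2 1 u p - b p * pd2 0 u p = 0) ∧
    ((∀ p, pd2 0 b p = pd2 1 a p) →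
      ¬ (∀ p, 0 < u p * (pd2 0 b p - pd2 1 a p)
            + a p * pd2 1 u p - b p * pd2 0 u p)) := by
  obtain ⟨p, hp⟩ := exists_fderiv_eq_zero_of_ZZPeriodic hu.continuous hup
  have hpd : ∀ i, pd2 i u p = 0 := fun i => by simp [pd2, hp]
  refine ⟨⟨p, by simp [hpd]⟩, fun hclosed hpos => ?_⟩
  have h := hpos p
  simp [hpd, hclosed p] at h
end

section
/- Let U ⊆ ℝ² be an open neighborhood of 0 and let Y, Y' : U → ℝ² be smooth vector fields with the same zero set Z = {p ∈ U : Y(p) = 0} = {p ∈ U : Y'(p) = 0}, such that 0 ∈ Z, the divergences div Y and div Y' are nonzero at every point of Z, and on U ∖ Z the fields are positively proportional: for every p ∈ U ∖ Z there is λ(p) > 0 with Y'(p) = λ(p)·Y(p). Then there exist an open neighborhood V ⊆ U of 0 and a smooth function u : V → ℝ with u > 0 on V and Y' = u·Y on V. (Giroux's lemma: two singular foliations with the same leaves and singularities of nonzero divergence are equal.) -/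
open Set Filter Topology MeasureTheory

/-- Differentiation under the integral sign to all orders, over the compact interval `[0, 1]`. -/
lemma contDiff_integral_unit_interval {E : Type} [NormedAddCommGroup E] [NormedSpace ℝ E]
    {G : E × ℝ → ℝ} (hG : ContDiff ℝ (⊤ : ℕ∞) G) :
    ContDiff ℝ (⊤ : ℕ∞) (fun x => ∫ t in (0 : ℝ)..1, G (x, t)) := by
  -- The integral is the value at `0` of the convolution of the indicator of `[0, 1]` with
  -- `t ↦ φ (-t) * G (x, -t)`, where the cutoff `φ` equals `1` on `[0, 1]`.
  let φ : ContDiffBump (0 : ℝ) := ⟨2, 3, by norm_num, by norm_num⟩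
  let g : E → ℝ → ℝ := fun x t => φ (-t) * G (x, -t)
  have hg : ContDiff ℝ (⊤ : ℕ∞) (fun z : E × ℝ => φ (-z.2) * G (z.1, -z.2)) :=
    (φ.contDiff.comp contDiff_snd.neg).mul (hG.comp (contDiff_fst.prodMk contDiff_snd.neg))
  have hf : LocallyIntegrable (indicator (Ioc (0 : ℝ) 1) (fun _ => (1 : ℝ))) volume :=
    (locallyIntegrable_const (1 : ℝ)).indicator measurableSet_Ioc
  have key := contDiffOn_convolution_right_with_param_comp (n := ⊤) (μ := volume)
    (ContinuousLinearMap.mul ℝ ℝ) (v := fun _ : E => (0 : ℝ)) (g := g)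
    (k := Metric.closedBall 0 3) contDiffOn_const isOpen_univ (isCompact_closedBall _ _)
    (fun p x _ hx => by
      have : φ (-x) = 0 := φ.zero_of_le_dist (by
        simp only [Metric.mem_closedBall, dist_zero_right, not_le] at hx
        simpa using hx.le)
      simp [g, this]) hf hg.contDiffOn
  rw [contDiffOn_univ] at key
  convert key using 2 with x
  rw [intervalIntegral.integral_of_le zero_le_one, convolution_def,
    ← integral_indicator measurableSet_Ioc]
  congr 1
  ext t
  by_cases ht : t ∈ Ioc (0 : ℝ) 1
  · have : φ t = 1 := φ.one_of_mem_closedBall (by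
      simp only [Metric.mem_closedBall, dist_zero_right, Real.norm_eq_abs, φ]
      rw [abs_le]; constructor <;> linarith [ht.1, ht.2])
    simp [ht, g, this]
  · simp [ht]

/-- Hadamard's lemma: a smooth function vanishing on the hyperplane `ℓ = 0` is a smooth multiple
of `ℓ`. -/
lemma hadamard_hyperplane {E : Type} [NormedAddCommGroup E] [NormedSpace ℝ E]
    (ℓ : E →L[ℝ] ℝ) (v : E) (hv : ℓ v = 1) {f : E → ℝ} (hf : ContDiff ℝ (⊤ : ℕ∞) f)
    (h0 : ∀ x, ℓ x = 0 → f x = 0) :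
    ∃ h : E → ℝ, ContDiff ℝ (⊤ : ℕ∞) h ∧ ∀ x, f x = h x * ℓ x := by
  -- Integrate the derivative of `f` along the segment from the projection `x - ℓ x • v` to `x`.
  let γ : E × ℝ → E := fun z => z.1 - ℓ z.1 • v + z.2 • (ℓ z.1 • v)
  have hγ : ContDiff ℝ (⊤ : ℕ∞) γ := by
    have h1 : ContDiff ℝ (⊤ : ℕ∞) (fun z : E × ℝ => ℓ z.1 • v) :=
      (ℓ.contDiff.comp contDiff_fst).smul contDiff_const
    exact (contDiff_fst.sub h1).add (contDiff_snd.smul h1)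
  have hdf : ContDiff ℝ (⊤ : ℕ∞) (fderiv ℝ f) := hf.fderiv_right (by simp)
  refine ⟨fun x => ∫ t in (0 : ℝ)..1, fderiv ℝ f (γ (x, t)) v,
    contDiff_integral_unit_interval (G := fun z => fderiv ℝ f (γ z) v)
      ((hdf.comp hγ).clm_apply contDiff_const), fun x => ?_⟩
  have hder : ∀ t ∈ uIcc (0 : ℝ) 1,
      HasDerivAt (fun t => f (γ (x, t))) (fderiv ℝ f (γ (x, t)) v * ℓ x) t := by
    intro t _
    have h1 : HasDerivAt (fun t : ℝ => γ (x, t)) (ℓ x • v) t := by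
      have h2 := ((hasDerivAt_id t).smul_const (ℓ x • v)).const_add (x - ℓ x • v)
      rw [one_smul] at h2
      exact h2
    have h2 := ((hf.differentiable (by simp)) (γ (x, t))).hasFDerivAt.comp_hasDerivAt t h1
    simpa [mul_comm, Function.comp_def] using h2
  have hcont : Continuous (fun t : ℝ => fderiv ℝ f (γ (x, t)) v * ℓ x) :=
    (((hdf.continuous.comp hγ.continuous).comp
      (by fun_prop : Continuous fun t : ℝ => (x, t))).clm_apply continuous_const).mul continuous_const
  have := intervalIntegral.integral_eq_sub_of_hasDerivAt hder (hcont.intervalIntegrable _ _)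
  rw [intervalIntegral.integral_mul_const] at this
  have hz : f (γ (x, 0)) = 0 := h0 _ (by simp [γ, hv])
  rw [this, hz]
  simp [γ]

/-- The derivative of the chart `p ↦ p + (F p - ℓ p) • v`, where `A` is the derivative of `F`; it is
invertible because `A v ≠ 0`. -/
noncomputable def shearEquiv {E : Type} [NormedAddCommGroup E] [NormedSpace ℝ E]
    (ℓ A : E →L[ℝ] ℝ) (v : E) (hv : ℓ v = 1) (hA : A v ≠ 0) : E ≃L[ℝ] E :=
  ContinuousLinearEquiv.equivOfInverse
    (ContinuousLinearMap.id ℝ E + (A - ℓ).smulRight v)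
    (ContinuousLinearMap.id ℝ E - (A v)⁻¹ • (A - ℓ).smulRight v)
    (fun w => by
      have hc : A v * (A v)⁻¹ = 1 := mul_inv_cancel₀ hA
      simp [hv]
      match_scalars
      · ring
      · linear_combination (ℓ w - A w) * hc)
    (fun w => by
      have hc : A v * (A v)⁻¹ = 1 := mul_inv_cancel₀ hA
      simp [hv]
      match_scalars
      · ring
      · linear_combination (ℓ w - A w) * hc)

/-- Division by a defining function: if `F` is regular at its zero `0` and `f` vanishes wherever `F`
does, then `f` is a smooth multiple of `F` near `0`. -/
lemma exists_smooth_quotient {E : Type} [NormedAddCommGroup E] [NormedSpace ℝ E]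
    [FiniteDimensional ℝ E] (ℓ : E →L[ℝ] ℝ) (v : E) (hv : ℓ v = 1)
    {U : Set E} (hU : IsOpen U) (h0U : (0 : E) ∈ U) {F f : E → ℝ}
    (hF : ContDiffOn ℝ (⊤ : ℕ∞) F U) (hf : ContDiffOn ℝ (⊤ : ℕ∞) f U)
    (hreg : ∀ p ∈ U, fderiv ℝ F p v ≠ 0) (hF0 : F 0 = 0)
    (hvan : ∀ p ∈ U, F p = 0 → f p = 0) :
    ∃ V ⊆ U, IsOpen V ∧ (0 : E) ∈ V ∧
      ∃ h : E → ℝ, ContDiffOn ℝ (⊤ : ℕ∞) h V ∧ ∀ p ∈ V, f p = h p * F p := by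
  -- In the chart `Φ`, the function `F` becomes the linear function `ℓ`.
  let Φ : E → E := fun p => p + (F p - ℓ p) • v
  have hℓΦ : ∀ p, ℓ (Φ p) = F p := fun p => by simp [Φ, hv]
  have hΦ0 : Φ 0 = 0 := by simp [Φ, hF0]
  have hFat : ∀ p ∈ U, ContDiffAt ℝ (⊤ : ℕ∞) F p := fun p hp => hF.contDiffAt (hU.mem_nhds hp)
  have hΦ : ∀ p ∈ U, ContDiffAt ℝ (⊤ : ℕ∞) Φ p := fun p hp =>
    contDiffAt_id.add (((hFat p hp).sub ℓ.contDiff.contDiffAt).smul contDiffAt_const)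
  have hΦ' : ∀ p (hp : p ∈ U),
      HasFDerivAt Φ (shearEquiv ℓ (fderiv ℝ F p) v hv (hreg p hp) : E →L[ℝ] E) p := fun p hp => by
    have h1 := ((hFat p hp).differentiableAt (by simp)).hasFDerivAt
    exact (hasFDerivAt_id p).add ((h1.sub ℓ.hasFDerivAt).smul_const v)
  let e := ((hΦ 0 h0U).toOpenPartialHomeomorph Φ (hΦ' 0 h0U) (by simp)).restrOpen U hU
  have heΦ : ∀ p, e p = Φ p := fun p => rfl
  have heU : e.source ⊆ U := fun p hp => by
    simpa [e] using (show p ∈ _ ∩ U from hp).2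
  have h0e : (0 : E) ∈ e.source :=
    ⟨(hΦ 0 h0U).mem_toOpenPartialHomeomorph_source (hΦ' 0 h0U) (by simp), h0U⟩
  have h0t : (0 : E) ∈ e.target := by
    have := e.map_source h0e
    rwa [heΦ, hΦ0] at this
  have hg : ∀ x ∈ e.target, ContDiffAt ℝ (⊤ : ℕ∞) (fun x => f (e.symm x)) x := fun x hx => by
    have hs := heU (e.map_target hx)
    exact (hf.contDiffAt (hU.mem_nhds hs)).comp x (e.contDiffAt_symm hx (hΦ' _ hs) (hΦ _ hs))
  obtain ⟨r, hr, hrt⟩ := Metric.nhds_basis_closedBall.mem_iff.1 (e.open_target.mem_nhds h0t)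
  let φ : ContDiffBump (0 : E) := ⟨r / 2, r, by positivity, by linarith⟩
  -- A cutoff of `f ∘ e.symm`, to which the global Hadamard lemma applies.
  have hcut : ContDiff ℝ (⊤ : ℕ∞) (fun x => φ x * f (e.symm x)) := by
    rw [contDiff_iff_contDiffAt]
    intro x
    by_cases hx : x ∈ tsupport φ
    · rw [φ.tsupport_eq] at hx
      exact φ.contDiffAt.mul (hg x (hrt hx))
    · refine (contDiffAt_const (c := (0 : ℝ))).congr_of_eventuallyEq ?_
      filter_upwards [notMem_tsupport_iff_eventuallyEq.1 hx] with y hy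
      simp [hy]
  obtain ⟨h, hh, hfh⟩ := hadamard_hyperplane ℓ v hv hcut (fun x hx => by
    by_cases hxt : x ∈ e.target
    · have : F (e.symm x) = 0 := by rw [← hℓΦ, ← heΦ, e.right_inv hxt, hx]
      simp [hvan _ (heU (e.map_target hxt)) this]
    · have : φ x = 0 := φ.zero_of_le_dist (by
        by_contra hlt
        exact hxt (hrt (Metric.mem_closedBall.2 (not_le.1 hlt).le)))
      simp [this])
  refine ⟨e.source ∩ e ⁻¹' Metric.ball 0 (r / 2), fun p hp => heU hp.1,
    e.isOpen_inter_preimage Metric.isOpen_ball, ⟨h0e, ?_⟩, fun p => h (Φ p), ?_, ?_⟩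
  · simp [heΦ, hΦ0, hr]
  · exact fun p hp => (hh.contDiffAt.comp p (hΦ p (heU hp.1))).contDiffWithinAt
  · intro p hp
    have h1 : φ (Φ p) = 1 := φ.one_of_mem_closedBall (Metric.ball_subset_closedBall hp.2)
    have h2 : e.symm (Φ p) = p := e.left_inv hp.1
    have := hfh (Φ p)
    rwa [h1, h2, hℓΦ, one_mul] at this

/-- Giroux's lemma (local version at a singularity): two vector fields on a neighborhood of
the origin with the same zeros (of nonzero divergence for both) which are positively
proportional away from their zeros differ by multiplication by a positive smooth function
near the origin. Hence two singular foliations with the same leaves whose singularities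
have nonzero divergence are equal. -/
theorem giroux_same_leaves (U : Set (Fin 2 → ℝ)) (hU : IsOpen U) (h0U : (0 : Fin 2 → ℝ) ∈ U)
    (Y Y' : (Fin 2 → ℝ) → Fin 2 → ℝ)
    (hY : ContDiffOn ℝ (⊤ : ℕ∞) Y U) (hY' : ContDiffOn ℝ (⊤ : ℕ∞) Y' U)
    (hzeros : ∀ p ∈ U, (Y p = 0 ↔ Y' p = 0))
    (h00 : Y 0 = 0)
    (hdiv : ∀ p ∈ U, Y p = 0 → div2 Y p ≠ 0 ∧ div2 Y' p ≠ 0)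
    (hprop : ∀ p ∈ U, Y p ≠ 0 → ∃ l : ℝ, 0 < l ∧ Y' p = l • Y p) :
    ∃ V : Set (Fin 2 → ℝ), V ⊆ U ∧ IsOpen V ∧ (0 : Fin 2 → ℝ) ∈ V ∧
      ∃ u : (Fin 2 → ℝ) → ℝ, ContDiffOn ℝ (⊤ : ℕ∞) u V ∧
        (∀ p ∈ V, 0 < u p) ∧ (∀ p ∈ V, Y' p = u p • Y p) := by
  obtain ⟨i, hi⟩ : ∃ i : Fin 2, pd2 i (fun q => Y q i) 0 ≠ 0 := by
    by_contra! hcon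
    exact (hdiv 0 h0U h00).1 (by simp [div2, hcon])
  have hYi : ∀ k, ContDiffOn ℝ (⊤ : ℕ∞) (fun q => Y q k) U := fun k => contDiffOn_pi.1 hY k
  have hYi' : ∀ k, ContDiffOn ℝ (⊤ : ℕ∞) (fun q => Y' q k) U := fun k => contDiffOn_pi.1 hY' k
  let W : Set (Fin 2 → ℝ) := U ∩ (fun p => pd2 i (fun q => Y q i) p) ⁻¹' {0}ᶜ
  have hW : IsOpen W := by
    have hc : ContinuousOn (fun p => pd2 i (fun q => Y q i) p) U :=
      ((hYi i).continuousOn_fderiv_of_isOpen hU (by simp)).clm_apply continuousOn_const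
    exact hc.isOpen_inter_preimage hU isOpen_compl_singleton
  obtain ⟨V, hVW, hV, h0V, h, hh, hfh⟩ := exists_smooth_quotient
    (ContinuousLinearMap.proj i : (Fin 2 → ℝ) →L[ℝ] ℝ) (Pi.single i 1) (by simp) hW ⟨h0U, hi⟩
    ((hYi i).mono inter_subset_left) ((hYi' i).mono inter_subset_left)
    (fun p hp => hp.2) (by simp [h00]) (fun p hp hp0 => by
      by_cases hYp : Y p = 0
      · simp [(hzeros p hp.1).1 hYp]
      · obtain ⟨l, -, hl⟩ := hprop p hp.1 hYp
        simp [hl, hp0])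
  have hVU : V ⊆ U := fun p hp => (hVW hp).1
  have hreg : ∀ p ∈ V, Y p i ≠ 0 → 0 < h p ∧ Y' p = h p • Y p := by
    intro p hp hne
    obtain ⟨l, hl, hlY⟩ := hprop p (hVU hp) (fun h0 => hne (by simp [h0]))
    have : h p = l := by
      have h1 := hfh p hp
      rw [hlY] at h1
      exact (mul_right_cancel₀ hne h1).symm
    rw [this]
    exact ⟨hl, hlY⟩
  have hdense : ∀ p ∈ V, ∃ᶠ q in 𝓝 p, q ∈ V ∧ Y q i ≠ 0 := by
    intro p hp hcon
    have : (fun q => Y q i) =ᶠ[𝓝 p] fun _ => 0 := by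
      filter_upwards [hcon, hV.mem_nhds hp] with q hq hqV
      by_contra hne
      exact hq ⟨hqV, hne⟩
    exact (hVW hp).2 (by simp [pd2, this.fderiv_eq])
  have hhc : ∀ p ∈ V, ContinuousAt h p := fun p hp => hh.continuousOn.continuousAt (hV.mem_nhds hp)
  have hnonneg : ∀ p ∈ V, 0 ≤ h p := by
    intro p hp
    by_contra! hlt
    obtain ⟨q, ⟨hqV, hq⟩, hq'⟩ := ((hdense p hp).and_eventually ((hhc p hp).eventually_lt
      continuousAt_const hlt)).exists
    exact absurd (hreg q hqV hq).1 (not_lt.2 hq'.le)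
  have hmul : ∀ p ∈ V, Y' p = h p • Y p := by
    intro p hp
    by_contra hne
    have hUp := hU.mem_nhds (hVU hp)
    obtain ⟨q, ⟨hqV, hq⟩, hq'⟩ := ((hdense p hp).and_eventually
      (((hY'.continuousOn.continuousAt hUp).sub
        ((hhc p hp).smul (hY.continuousOn.continuousAt hUp))).eventually_ne
          (sub_ne_zero.2 hne))).exists
    exact hq' (sub_eq_zero.2 (hreg q hqV hq).2)
  refine ⟨V, hVU, hV, h0V, h, hh, fun p hp => lt_of_le_of_ne (hnonneg p hp) fun h0 => ?_, hmul⟩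
  have hp0 : Y' p = 0 := by rw [hmul p hp, ← h0, zero_smul]
  have hYp : Y p = 0 := (hzeros p (hVU hp)).2 hp0
  -- The product rule at a common zero of `h` and `Y`.
  have hd : ∀ k, fderiv ℝ (fun q => Y' q k) p = 0 := by
    intro k
    have h1 : (fun q => Y' q k) =ᶠ[𝓝 p] fun q => h q * Y q k := by
      filter_upwards [hV.mem_nhds hp] with q hq
      rw [hmul q hq]; rfl
    rw [h1.fderiv_eq, fderiv_fun_mul
      ((hh.contDiffAt (hV.mem_nhds hp)).differentiableAt (by simp))
      (((hYi k).contDiffAt (hU.mem_nhds (hVU hp))).differentiableAt (by simp))]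
    simp [← h0, hYp]
  exact (hdiv p (hVU hp) hYp).2 (by simp [div2, pd2, hd])
end

section
/- Let u, W : ℝ² → ℝ and Y : ℝ² → ℝ² be smooth and suppose u(p)·div Y(p) − du_p(Y(p)) + W(p) > 0 for every p ∈ ℝ². Let γ : [0,1] → ℝ² be differentiable with γ'(t) = Y(γ(t)) for all t, and suppose u(γ(0)) < 0 < u(γ(1)). Then there exists τ ∈ (0,1) with u(γ(τ)) = 0, du_{γ(τ)}(Y(γ(τ))) ≥ 0, and W(γ(τ)) > 0. (Along a retrograde connection, going from the negative region to the positive region, there is a point of the dividing set where the time-derivative term β̇(Y) of the contact structure is strictly positive: the contact structure must rotate positively there.) -/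
/-- Computational heart of Giroux's crossing lemma: if the contact condition (⋆)
`u·div Y − du(Y) + W > 0` holds (with `W` playing the role of `β̇(Y)`), then along an orbit
`γ` of `Y` going from the region `{u < 0}` to the region `{u > 0}` (a retrograde
connection) there is a point of the dividing set (`u = 0`) where `du(Y) ≥ 0` and hence
`W > 0`: the contact structure must rotate positively there. -/
theorem crossing_lemma_core (u W : (Fin 2 → ℝ) → ℝ) (Y : (Fin 2 → ℝ) → Fin 2 → ℝ)
    (hu : ContDiff ℝ (⊤ : ℕ∞) u) (hW : ContDiff ℝ (⊤ : ℕ∞) W) (hY : ContDiff ℝ (⊤ : ℕ∞) Y)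
    (hcontact : ∀ p, 0 < u p * div2 Y p - fderiv ℝ u p (Y p) + W p)
    (γ : ℝ → Fin 2 → ℝ) (hγ : ∀ t ∈ Set.Icc (0 : ℝ) 1, HasDerivAt γ (Y (γ t)) t)
    (h0 : u (γ 0) < 0) (h1 : 0 < u (γ 1)) :
    ∃ τ ∈ Set.Ioo (0 : ℝ) 1, u (γ τ) = 0 ∧
      0 ≤ fderiv ℝ u (γ τ) (Y (γ τ)) ∧ 0 < W (γ τ) := by
  have hd : ∀ t ∈ Set.Icc (0 : ℝ) 1,
      HasDerivAt (fun s => u (γ s)) (fderiv ℝ u (γ t) (Y (γ t))) t := fun t ht =>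
    (hu.differentiable (by simp) (γ t)).hasFDerivAt.comp_hasDerivAt t (hγ t ht)
  have hc : ContinuousOn (fun s => u (γ s)) (Set.Icc 0 1) := fun t ht =>
    (hd t ht).continuousAt.continuousWithinAt
  have hK : IsCompact (Set.Icc (0 : ℝ) 1 ∩ (fun s => u (γ s)) ⁻¹' Set.Iic 0) :=
    isCompact_Icc.of_isClosed_subset (hc.preimage_isClosed_of_isClosed isClosed_Icc isClosed_Iic)
      Set.inter_subset_left
  -- `τ` is the last time at which `u ∘ γ` is nonpositive.
  obtain ⟨τ, ⟨hτ, hle⟩, hmax⟩ := hK.exists_isGreatest ⟨0, by simp, h0.le⟩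
  have hle : u (γ τ) ≤ 0 := hle
  have hτ1 : τ < 1 := lt_of_le_of_ne hτ.2 (by rintro rfl; linarith)
  have hpos : ∀ᶠ t in nhdsWithin τ (Set.Ioi τ), 0 < u (γ t) := by
    filter_upwards [Ioo_mem_nhdsGT hτ1] with t ht
    by_contra! h
    exact absurd (hmax ⟨⟨hτ.1.trans ht.1.le, ht.2.le⟩, h⟩) (not_le.2 ht.1)
  have hzero : u (γ τ) = 0 := le_antisymm hle <|
    ge_of_tendsto ((hd τ hτ).continuousAt.tendsto.mono_left nhdsWithin_le_nhds)
      (hpos.mono fun _ h => h.le)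
  have hτ0 : 0 < τ := lt_of_le_of_ne hτ.1 (by rintro rfl; linarith)
  -- The right difference quotients of `u ∘ γ` at `τ` are positive, so its derivative is `≥ 0`.
  have hder : 0 ≤ fderiv ℝ u (γ τ) (Y (γ τ)) := by
    have hs := (hasDerivWithinAt_iff_tendsto_slope' (Set.self_notMem_Ioi (a := τ))).1
      (hd τ hτ).hasDerivWithinAt
    refine ge_of_tendsto hs ?_
    filter_upwards [hpos, self_mem_nhdsWithin] with t ht htτ
    rw [slope_def_field, hzero, sub_zero]
    exact div_nonneg ht.le (sub_nonneg.2 (le_of_lt htτ))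
  have hcτ := hcontact (γ τ)
  rw [hzero, zero_mul] at hcτ
  exact ⟨τ, ⟨hτ0, hτ1⟩, hzero, hder, by linarith⟩
end
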